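/- arXiv:2008.08411 — 2 statements merged into one kernel-verified Lean document; each statement's English description precedes it below -/
import Mathlib

section
/- (Chevalley's lemma) Let R be a complete local Noetherian ring with maximal ideal 𝔪, and let (aₙ)ₙ be a decreasing sequence of ideals of R with ⋂ₙ aₙ = 0. Then for every positive integer k there exists N such that a_N ⊆ 𝔪^k. -/
/-!
Let `I` be an ideal of a Noetherian ring `R`, contained in the Jacobson radical and with `R / I`
Artinian, let `(Nᵢ)` be a downward directed family of submodules of a finite `R`-module `M` that
is complete in the `I`-adic topology, and put `Lₙ = ⋂ᵢ (Nᵢ + IⁿM)`. Since `M / IⁿM` is Artinian,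
this intersection is attained by some `Nᵢ + IⁿM`, and it follows that `Lₙ₊₁ + IⁿM = Lₙ`. Elements
of `Lₖ` can therefore be lifted successively along the `Lₙ`, and by completeness the lifts
converge to an element of `⋂ₙ Lₙ`, so `Lₖ ⊆ ⋂ₙ Lₙ + IᵏM`. But `⋂ₙ Lₙ` is the intersection of the
`I`-adic closures of the `Nᵢ`, which are closed by Krull's intersection theorem, and some `Nᵢ` is
contained in `Lₖ`.
-/

theorem exists_eq_iInf_of_directed {α : Type*} {ι : Sort*} [CompleteLattice α]
    [WellFoundedLT α] [Nonempty ι] {f : ι → α} (hf : Directed (· ≥ ·) f) : ∃ i, f i = ⨅ j, f j := by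
  obtain ⟨x, hmin⟩ :=
    exists_minimal_of_wellFoundedLT (· ∈ Set.range f) (Set.range_nonempty f)
  have hleast : IsLeast (Set.range f) x := hf.directedOn_range.minimal_iff_isLeast.mp hmin
  obtain ⟨i, hi⟩ := hleast.1
  exact ⟨i, hi.trans hleast.isGLB.iInf_eq.symm⟩

section Module

variable {R M : Type*} [CommRing R] [AddCommGroup M] [Module R M]

section Directed

variable {ι : Sort*} [Nonempty ι] {N : ι → Submodule R M}

theorem exists_sup_eq_iInf_sup_of_isArtinian_quotient (hN : Directed (· ≥ ·) N)
    (P : Submodule R M) [IsArtinian R (M ⧸ P)] :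
    ∃ i, N i ⊔ P = ⨅ j, N j ⊔ P := by
  have hmap : Directed (· ≥ ·) fun i ↦ (N i).map P.mkQ :=
    hN.mono_comp (· ≥ ·) (g := Submodule.map P.mkQ) fun _ _ h ↦ Submodule.map_mono h
  obtain ⟨i, hi⟩ := exists_eq_iInf_of_directed hmap
  refine ⟨i, ?_⟩
  simpa only [Submodule.comap_iInf, Submodule.comap_map_mkQ, sup_comm P] using
    congrArg (Submodule.comap P.mkQ) hi

theorem iInf_sup_sup_eq_iInf_sup_of_isArtinian_quotient (hN : Directed (· ≥ ·) N)
    {P Q : Submodule R M} [IsArtinian R (M ⧸ P)] (hPQ : P ≤ Q) :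
    (⨅ i, N i ⊔ P) ⊔ Q = ⨅ i, N i ⊔ Q := by
  apply le_antisymm
  · exact sup_le (iInf_mono fun i ↦ sup_le_sup_left hPQ _) (le_iInf fun i ↦ le_sup_right)
  · obtain ⟨i, hi⟩ := exists_sup_eq_iInf_sup_of_isArtinian_quotient hN P
    rw [← hi, sup_assoc, sup_eq_right.mpr hPQ]
    exact iInf_le _ i

end Directed

theorem le_iInf_sup_pow_smul_top {I : Ideal R} [IsPrecomplete I M] {L : ℕ → Submodule R M}
    (hL : ∀ n, L (n + 1) ⊔ I ^ n • ⊤ = L n) (k : ℕ) :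
    L k ≤ (⨅ n, L n) ⊔ I ^ k • ⊤ := by
  intro x hx
  have hanti : Antitone L := antitone_nat_of_succ_le fun n ↦ le_sup_left.trans (hL n).le
  have hlift : ∀ n, ∀ y ∈ L n, ∃ z ∈ L (n + 1), y ≡ z [SMOD (I ^ n • ⊤ : Submodule R M)] := by
    intro n y hy
    obtain ⟨z, hz, w, hw, rfl⟩ := Submodule.mem_sup.mp ((hL n).ge hy)
    exact ⟨z, hz, SModEq.sub_mem.mpr (by simpa using hw)⟩
  choose! g hgL hg using hlift
  let f : ℕ → M := Nat.rec x fun n y ↦ g (k + n) y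
  have hfL : ∀ n, f n ∈ L (k + n) := Nat.rec hx fun n ih ↦ hgL (k + n) (f n) ih
  have hf {m n : ℕ} (h : m ≤ k + n) : f n ≡ f (n + 1) [SMOD (I ^ m • ⊤ : Submodule R M)] :=
    (hg (k + n) (f n) (hfL n)).mono (Submodule.pow_smul_top_le I M h)
  have hxf : ∀ n, x ≡ f n [SMOD (I ^ k • ⊤ : Submodule R M)] :=
    Nat.rec SModEq.rfl fun n ih ↦ ih.trans (hf (Nat.le_add_right k n))
  obtain ⟨y, hy⟩ := IsPrecomplete.prec (I := I) inferInstance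
    ((AdicCompletion.isAdicCauchy_iff I M f).mpr fun n ↦ hf (Nat.le_add_left n k))
  have hyL : y ∈ ⨅ n, L n := by
    refine (Submodule.mem_iInf _).mpr fun n ↦ ?_
    have hfn : f n ∈ L n := hanti (Nat.le_add_left n k) (hfL n)
    have hyn : f n - y ∈ L n := le_sup_right.trans (hL n).le (SModEq.sub_mem.mp (hy n))
    exact (Submodule.sub_mem_iff_right _ hfn).mp hyn
  exact Submodule.mem_sup.mpr
    ⟨y, hyL, x - y, SModEq.sub_mem.mp ((hxf k).trans (hy k)), add_sub_cancel y x⟩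

/-- The closure of a submodule `N` of `M` in the `I`-adic topology, `⋂ₙ (N + IⁿM)`. -/
def adicClosure (I : Ideal R) (N : Submodule R M) : Submodule R M :=
  ⨅ n : ℕ, N ⊔ I ^ n • ⊤

theorem adicClosure_eq_self (I : Ideal R) (N : Submodule R M) [h : IsHausdorff I (M ⧸ N)] :
    adicClosure I N = N := by
  have hcomap (n : ℕ) : N ⊔ I ^ n • ⊤ = (I ^ n • ⊤ : Submodule R (M ⧸ N)).comap N.mkQ := by
    rw [← Submodule.comap_map_mkQ, Submodule.map_smul'', Submodule.map_top, Submodule.range_mkQ]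
  rw [adicClosure, iInf_congr hcomap, ← Submodule.comap_iInf, h.iInf_pow_smul,
    Submodule.comap_bot, Submodule.ker_mkQ]

theorem exists_le_iInf_adicClosure_sup_pow_smul_top {ι : Sort*} [Nonempty ι] (I : Ideal R)
    [IsPrecomplete I M] [∀ n : ℕ, IsArtinian R (M ⧸ (I ^ n • ⊤ : Submodule R M))]
    {N : ι → Submodule R M} (hN : Directed (· ≥ ·) N) (k : ℕ) :
    ∃ i, N i ≤ (⨅ j, adicClosure I (N j)) ⊔ I ^ k • ⊤ := by
  let L (n : ℕ) : Submodule R M := ⨅ i, N i ⊔ I ^ n • ⊤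
  have hL (n : ℕ) : L (n + 1) ⊔ I ^ n • ⊤ = L n :=
    iInf_sup_sup_eq_iInf_sup_of_isArtinian_quotient hN
      (Submodule.pow_smul_top_le I M n.le_succ)
  have hiInf : ⨅ n, L n = ⨅ j, adicClosure I (N j) := iInf_comm
  obtain ⟨i, hi⟩ := exists_sup_eq_iInf_sup_of_isArtinian_quotient hN (I ^ k • ⊤)
  refine ⟨i, ?_⟩
  calc
    N i ≤ N i ⊔ I ^ k • ⊤ := le_sup_left
    _ = L k := hi
    _ ≤ (⨅ n, L n) ⊔ I ^ k • ⊤ := le_iInf_sup_pow_smul_top hL k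
    _ = (⨅ j, adicClosure I (N j)) ⊔ I ^ k • ⊤ := by rw [hiInf]

end Module

theorem isArtinian_of_pow_le_annihilator {R : Type*} [CommRing R] {I : Ideal R} (hI : I.FG)
    [IsArtinianRing (R ⧸ I)] (n : ℕ) {M : Type*} [AddCommGroup M] [Module R M] [Module.Finite R M]
    (hM : I ^ n ≤ Module.annihilator R M) : IsArtinian R M := by
  induction n generalizing M with
  | zero =>
    have : Subsingleton M := by
      rwa [← Module.annihilator_eq_top_iff (R := R), ← top_le_iff, ← Ideal.one_eq_top, ← pow_zero I]
    infer_instance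
  | succ n ih =>
    rw [isArtinian_iff_submodule_quotient (I • ⊤ : Submodule R M)]
    constructor
    · have : Module.Finite R (I • ⊤ : Submodule R M) := .of_fg (.smul hI Module.Finite.fg_top)
      apply ih
      rwa [Submodule.le_annihilator_iff, ← Submodule.mul_smul, ← pow_succ,
        ← Submodule.le_annihilator_iff, Submodule.annihilator_top]
    · have : Module.Finite (R ⧸ I) (M ⧸ (I • ⊤ : Submodule R M)) := .of_restrictScalars_finite R _ _
      exact isArtinian_of_surjective_algebraMap (R := R ⧸ I) Ideal.Quotient.mk_surjective

theorem isArtinian_quotient_pow_smul_top {R M : Type*} [CommRing R] [AddCommGroup M] [Module R M]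
    [Module.Finite R M] {I : Ideal R} (hI : I.FG) [IsArtinianRing (R ⧸ I)] (n : ℕ) :
    IsArtinian R (M ⧸ (I ^ n • ⊤ : Submodule R M)) := by
  apply isArtinian_of_pow_le_annihilator hI n
  exact (Module.isTorsionBySet_iff_subset_annihilator _ _).mp
    (Module.isTorsionBySet_quotient_ideal_smul M (I ^ n))

theorem stmt_1_general {R M : Type*} {ι : Sort*} [CommRing R] [IsNoetherianRing R]
    [AddCommGroup M] [Module R M] [Module.Finite R M] [Nonempty ι]
    {I : Ideal R} [IsArtinianRing (R ⧸ I)] (hI : I ≤ Ideal.jacobson ⊥) [IsPrecomplete I M]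
    {N : ι → Submodule R M} (hN : Directed (· ≥ ·) N) (k : ℕ) :
    ∃ i, N i ≤ (⨅ j, N j) ⊔ I ^ k • ⊤ := by
  have (n : ℕ) : IsArtinian R (M ⧸ (I ^ n • ⊤ : Submodule R M)) :=
    isArtinian_quotient_pow_smul_top I.fg_of_isNoetherianRing n
  have (j : ι) : IsHausdorff I (M ⧸ N j) := .of_le_jacobson I _ hI
  simpa only [adicClosure_eq_self] using exists_le_iInf_adicClosure_sup_pow_smul_top I hN k

theorem stmt_1 {R : Type*} [CommRing R] [IsNoetherianRing R] [IsLocalRing R]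
    [IsAdicComplete (IsLocalRing.maximalIdeal R) R]
    (a : ℕ → Ideal R) (hdec : Antitone a) (hinf : ⨅ n, a n = ⊥) :
    ∀ k : ℕ, 0 < k → ∃ N : ℕ, a N ≤ (IsLocalRing.maximalIdeal R) ^ k := by
  have : IsArtinianRing (R ⧸ IsLocalRing.maximalIdeal R) :=
    inferInstanceAs (IsArtinianRing (IsLocalRing.ResidueField R))
  intro k _
  simpa only [hinf, bot_sup_eq, smul_eq_mul, Ideal.mul_top] using
    stmt_1_general (IsLocalRing.maximalIdeal_le_jacobson _) hdec.directed_ge k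
end

section
/- Let R be a finite commutative local ring with maximal ideal 𝔪 and residue field k = R/𝔪 of cardinality at least 4. Then the kernel N₀ of the natural surjection SL₂(R) → PSL₂(k) contains every proper normal subgroup of SL₂(R). In particular, N₀ is the unique maximal proper normal subgroup of SL₂(R), and SL₂(R)/N₀ ≅ PSL₂(k) is non-solvable. -/
/-!
Let `k` be the residue field and `N` a normal subgroup of `SL₂(R)` not contained in `N₀`. As
`SL₂(k)` is perfect and `PSL₂(k)` is simple, `N` maps onto `SL₂(k)`. So `N` contains matrices
`g₁`, `g₂` whose lower left entries `c₁`, `c₂` reduce to `1` and `a`, where `a ∈ k` satisfies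
`a ≠ 0` and `a² ≠ 1`. Conjugation by upper transvections makes the upper left entries vanish
without changing `c₁` and `c₂`; then `g₁⁻¹ g₂ ∈ N` is upper triangular with diagonal
`(c₂ / c₁, c₁ / c₂)`. Since `1 - (c₂ / c₁)²` is a unit, the commutators of this matrix with upper
transvections are all the upper transvections, and their conjugates generate `SL₂(R)`.
-/

open Matrix.SpecialLinearGroup IsLocalRing
open scoped MatrixGroups commutatorElement

lemma le_center_of_normal_of_ne_top {G : Type*} [Group G] [Group.IsPerfect G]
    [IsSimpleGroup (G ⧸ Subgroup.center G)] {N : Subgroup G} (hN : N.Normal) (hne : N ≠ ⊤) :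
    N ≤ Subgroup.center G := by
  have hmap : (N.map (QuotientGroup.mk' (Subgroup.center G))).Normal :=
    hN.map _ (QuotientGroup.mk'_surjective _)
  obtain hbot | htop := hmap.eq_bot_or_eq_top
  · rwa [Subgroup.map_eq_bot_iff, QuotientGroup.ker_mk'] at hbot
  · refine absurd (top_le_iff.1 ?_) hne
    have hsup : N ⊔ Subgroup.center G = ⊤ := by
      rw [← QuotientGroup.ker_mk' (Subgroup.center G), ← Subgroup.comap_map_eq, htop,
        Subgroup.comap_top]
    rw [← Group.IsPerfect.commutator_eq_top (G := G)]
    exact hN.commutator_le_of_self_sup_commutative_eq_top hsup inferInstance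

lemma exists_ne_zero_sq_ne_one {K : Type*} [Field K] (hK : 4 ≤ ENat.card K) :
    ∃ a : K, a ≠ 0 ∧ a ^ 2 ≠ 1 := by
  have hlen : (([0, 1, -1] : List K).length : Cardinal) < Cardinal.mk K :=
    Cardinal.natCast_lt_toENat.1 (lt_of_lt_of_le (by norm_num) hK)
  obtain ⟨a, ha⟩ := Cardinal.exists_notMem_of_length_lt _ hlen
  simp only [List.mem_cons, List.not_mem_nil, or_false, not_or] at ha
  exact ⟨a, ha.1, sq_ne_one_iff.2 ha.2⟩

lemma map_transvection {ι R S : Type*} [Fintype ι] [DecidableEq ι] [CommRing R] [CommRing S]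
    (f : R →+* S) {i j : ι} (hij : i ≠ j) (x : R) :
    Matrix.SpecialLinearGroup.map f (transvection hij x) = transvection hij (f x) := by
  ext k l
  simp [transvection_coe, Matrix.one_apply, Matrix.single_apply, apply_ite f]

section CommRing

variable {R : Type*} [CommRing R]

lemma specialLinearGroup_fin_two_det_eq_one (g : SL(2, R)) :
    g 0 0 * g 1 1 - g 0 1 * g 1 0 = 1 :=
  (Matrix.det_fin_two _).symm.trans g.det_coe

lemma coe_transvection_zero_one (x : R) :
    (transvection (zero_ne_one : (0 : Fin 2) ≠ 1) x : Matrix (Fin 2) (Fin 2) R) =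
      !![1, x; 0, 1] := by
  ext i j
  fin_cases i <;> fin_cases j <;> simp [transvection_coe]

lemma coe_transvection_one_zero (x : R) :
    (transvection (one_ne_zero : (1 : Fin 2) ≠ 0) x : Matrix (Fin 2) (Fin 2) R) =
      !![1, 0; x, 1] := by
  ext i j
  fin_cases i <;> fin_cases j <;> simp [transvection_coe]

lemma isConj_transvection_neg_transvection (x : R) :
    IsConj (transvection (zero_ne_one : (0 : Fin 2) ≠ 1) (-x))
      (transvection (one_ne_zero : (1 : Fin 2) ≠ 0) x) := by
  -- `w` is `!![0, -1; 1, 0]`.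
  let w : SL(2, R) := transvection zero_ne_one (-1) * transvection one_ne_zero 1 *
    transvection zero_ne_one (-1)
  refine isConj_iff.2 ⟨w, Subtype.ext ?_⟩
  simp [w, coe_transvection_zero_one, coe_transvection_one_zero, Matrix.adjugate_fin_two_of]

lemma exists_eq_transvection_mul_mul {g : SL(2, R)} (hg : IsUnit (g 1 0)) :
    ∃ x y : R, g = transvection zero_ne_one x * transvection one_ne_zero (g 1 0) *
      transvection zero_ne_one y := by
  obtain ⟨e, he⟩ := hg.exists_left_inv
  have hdet := specialLinearGroup_fin_two_det_eq_one g
  -- The product has diagonal entries `1 + x * g 1 0` and `1 + g 1 0 * y`.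
  refine ⟨(g 0 0 - 1) * e, (g 1 1 - 1) * e, ?_⟩
  ext i j
  fin_cases i <;> fin_cases j <;>
    simp [coe_transvection_zero_one, coe_transvection_one_zero] <;> grind

lemma exists_isConj_apply_zero_zero_eq_zero {g : SL(2, R)} (hg : IsUnit (g 1 0)) :
    ∃ g' : SL(2, R), IsConj g g' ∧ g' 0 0 = 0 ∧ g' 1 0 = g 1 0 := by
  obtain ⟨e, he⟩ := hg.exists_left_inv
  refine ⟨_, isConj_iff.2 ⟨transvection zero_ne_one (-(g 0 0 * e)), rfl⟩, ?_, ?_⟩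
  · suffices g 0 0 + -(g 0 0 * e * g 1 0) = 0 by
      simpa [transvection_inv, coe_transvection_zero_one, Matrix.vecMul_eq_sum]
    linear_combination -(g 0 0) * he
  · simp [transvection_inv, coe_transvection_zero_one, Matrix.vecMul_eq_sum]

section InvMul

variable {g₁ g₂ : SL(2, R)} (h₁ : g₁ 0 0 = 0) (h₂ : g₂ 0 0 = 0)
include h₁ h₂

lemma inv_mul_apply_one_zero_eq_zero : (g₁⁻¹ * g₂) 1 0 = 0 := by
  simp [Matrix.adjugate_fin_two, Matrix.mul_apply, h₁, h₂]

lemma apply_one_zero_mul_inv_mul_apply_zero_zero :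
    g₁ 1 0 * (g₁⁻¹ * g₂) 0 0 = g₂ 1 0 := by
  have hdet := specialLinearGroup_fin_two_det_eq_one g₁
  have hentry : (g₁⁻¹ * g₂) 0 0 = -(g₁ 0 1 * g₂ 1 0) := by
    simp [Matrix.adjugate_fin_two, Matrix.mul_apply, h₂]
  rw [hentry]
  linear_combination g₂ 1 0 * hdet - g₁ 1 1 * g₂ 1 0 * h₁

end InvMul

section UpperTriangular

variable {h : SL(2, R)} (hh : h 1 0 = 0) (x : R)
include hh

lemma conj_transvection_of_apply_one_zero_eq_zero :
    h * transvection zero_ne_one x * h⁻¹ = transvection zero_ne_one (x * h 0 0 ^ 2) := by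
  have hdiag : h 0 0 * h 1 1 = 1 := by
    linear_combination specialLinearGroup_fin_two_det_eq_one h + h 0 1 * hh
  have hentry : h 0 0 * x = x * h 0 0 ^ 2 * h 1 1 := by
    linear_combination -x * h 0 0 * hdiag
  rw [mul_inv_eq_iff_eq_mul]
  ext i j
  fin_cases i <;> fin_cases j <;>
    simp [coe_transvection_zero_one, hh, hentry, Matrix.mul_apply, add_comm]

lemma commutatorElement_transvection_of_apply_one_zero_eq_zero :
    ⁅(transvection zero_ne_one x : SL(2, R)), h⁆ =
      transvection zero_ne_one (x * (1 - h 0 0 ^ 2)) := by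
  rw [commutatorElement_def, transvection_inv, mul_assoc, mul_assoc, ← mul_assoc h,
    conj_transvection_of_apply_one_zero_eq_zero hh, ← transvection_add]
  ring_nf

end UpperTriangular

end CommRing

section IsLocalRing

variable {R : Type*} [CommRing R] [IsLocalRing R]

lemma isUnit_apply_one_zero_or_isUnit_add (g : SL(2, R)) :
    IsUnit (g 1 0) ∨ IsUnit (g 0 0 + g 1 0) := by
  have hone : g 1 0 * -(g 0 1 + g 1 1) + (g 0 0 + g 1 0) * g 1 1 = 1 := by
    linear_combination specialLinearGroup_fin_two_det_eq_one g
  exact (isUnit_or_isUnit_of_add_one hone).imp isUnit_of_mul_isUnit_left isUnit_of_mul_isUnit_left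

lemma eq_top_of_forall_transvection_mem {H : Subgroup SL(2, R)}
    (hH : ∀ (i j : Fin 2) (hij : i ≠ j) (x : R), transvection hij x ∈ H) : H = ⊤ := by
  have mem_of_isUnit {g : SL(2, R)} (hg : IsUnit (g 1 0)) : g ∈ H := by
    obtain ⟨x, y, hxy⟩ := exists_eq_transvection_mul_mul hg
    rw [hxy]
    exact mul_mem (mul_mem (hH ..) (hH ..)) (hH ..)
  refine (Subgroup.eq_top_iff' H).2 fun g ↦ ?_
  obtain hg | hg := isUnit_apply_one_zero_or_isUnit_add g
  · exact mem_of_isUnit hg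
  · refine (Subgroup.mul_mem_cancel_left H (hH 1 0 one_ne_zero 1)).1 (mem_of_isUnit ?_)
    simpa [coe_transvection_one_zero, Matrix.vecMul_eq_sum, Matrix.mul_apply] using hg

lemma eq_top_of_forall_transvection_zero_one_mem {N : Subgroup SL(2, R)} (hN : N.Normal)
    (hmem : ∀ x : R, transvection (zero_ne_one : (0 : Fin 2) ≠ 1) x ∈ N) : N = ⊤ := by
  refine eq_top_of_forall_transvection_mem fun i j hij x ↦ ?_
  fin_cases i <;> fin_cases j
  · exact absurd rfl hij
  · exact hmem x
  · exact Group.conjugates_subset_normal (hmem (-x)) (isConj_transvection_neg_transvection x)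
  · exact absurd rfl hij

lemma specialLinearGroup_map_surjective {S : Type*} [CommRing S] {f : S →+* R}
    (hf : Function.Surjective f) :
    Function.Surjective (Matrix.SpecialLinearGroup.map (n := Fin 2) f) := by
  refine MonoidHom.range_eq_top.1 (eq_top_of_forall_transvection_mem fun i j hij y ↦ ?_)
  obtain ⟨x, rfl⟩ := hf y
  exact ⟨transvection hij x, map_transvection f hij x⟩

lemma eq_top_of_isUnit_one_sub_sq {N : Subgroup SL(2, R)} (hN : N.Normal) {h : SL(2, R)}
    (hmem : h ∈ N) (hh : h 1 0 = 0) (hunit : IsUnit (1 - h 0 0 ^ 2)) : N = ⊤ := by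
  obtain ⟨e, he⟩ := hunit.exists_left_inv
  refine eq_top_of_forall_transvection_zero_one_mem hN fun x ↦ ?_
  have hcomm := commutatorElement_transvection_of_apply_one_zero_eq_zero hh (x * e)
  rw [mul_assoc, he, mul_one] at hcomm
  rw [← hcomm, commutatorElement_def]
  exact mul_mem (hN.conj_mem h hmem _) (inv_mem hmem)

lemma eq_top_of_isUnit_sq_sub_sq {N : Subgroup SL(2, R)} (hN : N.Normal) {g₁ g₂ : SL(2, R)}
    (hg₁ : g₁ ∈ N) (hg₂ : g₂ ∈ N) (hu₁ : IsUnit (g₁ 1 0)) (hu₂ : IsUnit (g₂ 1 0))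
    (hu : IsUnit (g₁ 1 0 ^ 2 - g₂ 1 0 ^ 2)) : N = ⊤ := by
  obtain ⟨g₁', hconj₁, hg₁', hc₁⟩ := exists_isConj_apply_zero_zero_eq_zero hu₁
  obtain ⟨g₂', hconj₂, hg₂', hc₂⟩ := exists_isConj_apply_zero_zero_eq_zero hu₂
  have hmem : g₁'⁻¹ * g₂' ∈ N :=
    mul_mem (inv_mem (Group.conjugates_subset_normal hg₁ hconj₁))
      (Group.conjugates_subset_normal hg₂ hconj₂)
  have hdiag : g₁ 1 0 * (g₁'⁻¹ * g₂') 0 0 = g₂ 1 0 := by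
    rw [← hc₁, ← hc₂, apply_one_zero_mul_inv_mul_apply_zero_zero hg₁' hg₂']
  refine eq_top_of_isUnit_one_sub_sq hN hmem (inv_mul_apply_one_zero_eq_zero hg₁' hg₂') ?_
  have hfactor : g₁ 1 0 ^ 2 - g₂ 1 0 ^ 2 =
      g₁ 1 0 ^ 2 * (1 - (g₁'⁻¹ * g₂') 0 0 ^ 2) := by
    rw [← hdiag]
    ring
  exact isUnit_of_mul_isUnit_right (hfactor ▸ hu)

lemma eq_top_of_map_residue_eq_top {a : ResidueField R} (ha : a ≠ 0) (ha_sq : a ^ 2 ≠ 1)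
    {N : Subgroup SL(2, R)} (hN : N.Normal)
    (hmap : N.map (Matrix.SpecialLinearGroup.map (residue R)) = ⊤) : N = ⊤ := by
  have exists_mem_residue_eq (x : ResidueField R) : ∃ g ∈ N, residue R (g 1 0) = x := by
    obtain ⟨g, hg, hgx⟩ := Subgroup.mem_map.1
      (hmap.ge (Subgroup.mem_top (transvection (one_ne_zero : (1 : Fin 2) ≠ 0) x)))
    refine ⟨g, hg, ?_⟩
    simpa [coe_transvection_one_zero] using
      congr_arg (fun h : SL(2, ResidueField R) ↦ h 1 0) hgx
  obtain ⟨g₁, hg₁, hc₁⟩ := exists_mem_residue_eq 1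
  obtain ⟨g₂, hg₂, hc₂⟩ := exists_mem_residue_eq a
  refine eq_top_of_isUnit_sq_sub_sq hN hg₁ hg₂ ?_ ?_ ?_ <;> rw [← residue_ne_zero_iff_isUnit]
  · rw [hc₁]
    exact one_ne_zero
  · rwa [hc₂]
  · rw [map_sub, map_pow, map_pow, hc₁, hc₂, one_pow]
    exact sub_ne_zero.2 ha_sq.symm

end IsLocalRing

theorem stmt_4_general {R : Type*} [CommRing R] [IsLocalRing R]
    (hk : 4 ≤ ENat.card (ResidueField R)) :
    (∀ N : Subgroup SL(2, R), N.Normal → N ≠ ⊤ →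
      N ≤ ((QuotientGroup.mk' (Subgroup.center SL(2, ResidueField R))).comp
        (Matrix.SpecialLinearGroup.map (residue R))).ker) ∧
    ¬ Group.IsSolvable (SL(2, ResidueField R) ⧸ Subgroup.center SL(2, ResidueField R)) := by
  obtain ⟨a, ha, ha_sq⟩ := exists_ne_zero_sq_ne_one hk
  have hperfect : Group.IsPerfect SL(2, ResidueField R) := ⟨Matrix.SL2.commutator_eq_top ha ha_sq⟩
  have hsimple : IsSimpleGroup (SL(2, ResidueField R) ⧸ Subgroup.center SL(2, ResidueField R)) :=
    Matrix.ProjectiveSpecialLinearGroup.rank_two_simple' ⟨a, ha, ha_sq⟩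
  refine ⟨fun N hN hne ↦ ?_, Group.IsPerfect.not_isSolvable _⟩
  rw [← MonoidHom.comap_ker, QuotientGroup.ker_mk', ← Subgroup.map_le_iff_le_comap]
  exact le_center_of_normal_of_ne_top
    (hN.map _ (specialLinearGroup_map_surjective residue_surjective))
    fun hmap ↦ hne (eq_top_of_map_residue_eq_top ha ha_sq hN hmap)

theorem stmt_4 {R : Type*} [CommRing R] [IsLocalRing R] [Finite R]
    (hk : 4 ≤ Nat.card (IsLocalRing.ResidueField R)) :
    (∀ N : Subgroup (Matrix.SpecialLinearGroup (Fin 2) R), N.Normal → N ≠ ⊤ →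
      N ≤ MonoidHom.ker
        ((QuotientGroup.mk' (Subgroup.center
            (Matrix.SpecialLinearGroup (Fin 2) (IsLocalRing.ResidueField R)))).comp
          (Matrix.SpecialLinearGroup.map (IsLocalRing.residue R)))) ∧
    ¬ IsSolvable (Matrix.SpecialLinearGroup (Fin 2) (IsLocalRing.ResidueField R) ⧸
        Subgroup.center (Matrix.SpecialLinearGroup (Fin 2) (IsLocalRing.ResidueField R))) :=
  stmt_4_general ((Nat.cast_le.2 hk).trans (ENat.natCast_toNat_le_self _))
end
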